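/- If a 3-connected graph G contains K5+ or K33+ as a minor, then G contains at least one of EX1, EX2, EX8 as a minor. Consequently, every 3-connected graph that is {EX1, EX2, EX8}-free is {K5+, K33+}-free. -/

import Mathlib

open SimpleGraph

/-- `H` is a minor of `G` (branch-set / model definition). -/
def IsMinor {W V : Type*} (H : SimpleGraph W) (G : SimpleGraph V) : Prop :=
  ∃ B : W → Set V,
    (∀ w, (B w).Nonempty) ∧
    (∀ w, (G.induce (B w)).Connected) ∧
    (Pairwise fun w₁ w₂ => Disjoint (B w₁) (B w₂)) ∧
    (∀ ⦃w₁ w₂ : W⦄, H.Adj w₁ w₂ → ∃ v₁ ∈ B w₁, ∃ v₂ ∈ B w₂, G.Adj v₁ v₂)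

def K5 : SimpleGraph (Fin 5) := ⊤

def K33 : SimpleGraph (Fin 3 ⊕ Fin 3) := completeBipartiteGraph (Fin 3) (Fin 3)

/-- A graph is planar iff it has neither a `K₅` nor a `K₃,₃` minor (Wagner's theorem). -/
def Planar {V : Type*} (G : SimpleGraph V) : Prop := ¬ IsMinor K5 G ∧ ¬ IsMinor K33 G

/-- `G / uw`: contract the edge `uw`, merging `w` into `u` (the vertex `w` becomes isolated). -/
def contractEdge {V : Type*} (G : SimpleGraph V) (u w : V) : SimpleGraph V :=
  SimpleGraph.fromRel fun a b =>
    a ≠ w ∧ b ≠ w ∧ (G.Adj a b ∨ (a = u ∧ G.Adj w b) ∨ (b = u ∧ G.Adj a w))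

/-- A nonplanar graph is almost-planar if for every edge, deletion or contraction is planar. -/
def AlmostPlanar {V : Type*} (G : SimpleGraph V) : Prop :=
  ¬ Planar G ∧ ∀ ⦃u v : V⦄, G.Adj u v →
    (Planar (G.deleteEdges {s(u, v)}) ∨ Planar (contractEdge G u v))

/-- `G` is `k`-connected: more than `k` vertices and deleting fewer than `k` vertices
leaves a connected graph. -/
def KConnected {V : Type*} (G : SimpleGraph V) (k : ℕ) : Prop :=
  k < Nat.card V ∧ ∀ s : Set V, s.ncard < k → (G.induce (sᶜ)).Connected

/-- `{G[A], G[B]}` is a `k`-separation of `G`. -/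
def IsSep {V : Type*} (G : SimpleGraph V) (k : ℕ) (A B : Set V) : Prop :=
  A ∪ B = Set.univ ∧ A ≠ Set.univ ∧ B ≠ Set.univ ∧ (A ∩ B).ncard = k ∧
  ∀ ⦃x y : V⦄, G.Adj x y → (x ∈ A ∧ y ∈ A) ∨ (x ∈ B ∧ y ∈ B)

/-- The star `K_{1,3}`, with centre `0`. -/
def K13 : SimpleGraph (Fin 4) := SimpleGraph.fromRel fun a _ => a = 0

def InternallyFourConnected {V : Type*} (G : SimpleGraph V) : Prop :=
  KConnected G 3 ∧ 5 ≤ Nat.card V ∧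
  ∀ A B : Set V, IsSep G 3 A B →
    Xor' (Nonempty (G.induce A ≃g K13)) (Nonempty (G.induce B ≃g K13))

/-- The wheel `W_n`: a cycle of length `n` plus a hub (`none`) joined to all of it. -/
def wheelGraph (n : ℕ) : SimpleGraph (Option (Fin n)) :=
  SimpleGraph.fromRel fun a b =>
    match a, b with
    | some i, some j => j.val = (i.val + 1) % n
    | none, some _ => True
    | _, _ => False

def IsWheel {V : Type*} (G : SimpleGraph V) : Prop :=
  ∃ n, 3 ≤ n ∧ Nonempty (G ≃g wheelGraph n)

/-- The double wheel `DW_n`: a cycle of length `n` plus two adjacent hubs joined to all of it. -/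
def doubleWheel (n : ℕ) : SimpleGraph (Fin n ⊕ Fin 2) :=
  SimpleGraph.fromRel fun a b =>
    match a, b with
    | .inl i, .inl j => j.val = (i.val + 1) % n
    | .inl _, .inr _ => True
    | .inr _, .inr _ => True
    | _, _ => False

/-- The Möbius ladder `M_n`: a cycle of length `2n` plus all "opposite" chords. -/
def mobiusLadder (n : ℕ) : SimpleGraph (Fin (2 * n)) :=
  SimpleGraph.fromRel fun i j =>
    j.val = (i.val + 1) % (2 * n) ∨ j.val = (i.val + n) % (2 * n)

/-- `C²_m`: a cycle of length `m` plus all chords between vertices at distance two. -/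
def squareCycle (m : ℕ) : SimpleGraph (Fin m) :=
  SimpleGraph.fromRel fun i j =>
    j.val = (i.val + 1) % m ∨ j.val = (i.val + 2) % m

/-- The alternating double wheel `AW_{2n}`: a cycle of length `2n` plus two adjacent hubs,
each joined to alternating cycle vertices. -/
def altDoubleWheel (n : ℕ) : SimpleGraph (Fin (2 * n) ⊕ Fin 2) :=
  SimpleGraph.fromRel fun a b =>
    match a, b with
    | .inl i, .inl j => j.val = (i.val + 1) % (2 * n)
    | .inl i, .inr k => i.val % 2 = k.val
    | .inr _, .inr _ => True
    | _, _ => False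

/-- The class `𝒲`: three wheels glued along a common triangle `V₀`, with no other edges. -/
def InClassW {V : Type*} (G : SimpleGraph V) : Prop :=
  ∃ P : V → Fin 4,
    (P ⁻¹' {0}).ncard = 3 ∧
    (∀ x y : V, P x = 0 → P y = 0 → x ≠ y → G.Adj x y) ∧
    (∀ i : Fin 4, i ≠ 0 → IsWheel (G.induce {v | P v = 0 ∨ P v = i})) ∧
    (∀ ⦃x y : V⦄, G.Adj x y → ∃ i : Fin 4, i ≠ 0 ∧ (P x = 0 ∨ P x = i) ∧ (P y = 0 ∨ P y = i))

/-- `EX₁`: `K₃,₃` plus a vertex joined to all of one colour class. -/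
def EX1 : SimpleGraph (Option (Fin 3 ⊕ Fin 3)) :=
  SimpleGraph.fromRel fun a b =>
    match a, b with
    | some (.inl _), some (.inr _) => True
    | none, some (.inl _) => True
    | _, _ => False

/-- `EX₂`: `K₅` plus a vertex joined to three of its vertices. -/
def EX2 : SimpleGraph (Option (Fin 5)) :=
  SimpleGraph.fromRel fun a b =>
    match a, b with
    | some i, some j => i ≠ j
    | none, some j => j.val < 3
    | _, _ => False

/-- `EX₈`: `K₃,₃` plus a vertex joined to two vertices of one class and one of the other. -/
def EX8 : SimpleGraph (Option (Fin 3 ⊕ Fin 3)) :=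
  SimpleGraph.fromRel fun a b =>
    match a, b with
    | some (.inl _), some (.inr _) => True
    | none, some x => x = Sum.inl 0 ∨ x = Sum.inl 1 ∨ x = Sum.inr 0
    | _, _ => False

/-- `K₅ʰ`: subdivide the edges `01` and `02` of `K₅` and join the two subdivision vertices. -/
def K5h : SimpleGraph (Fin 5 ⊕ Fin 2) :=
  SimpleGraph.fromRel fun a b =>
    match a, b with
    | .inl i, .inl j =>
        i ≠ j ∧ ¬(i = 0 ∧ j = 1) ∧ ¬(i = 1 ∧ j = 0) ∧ ¬(i = 0 ∧ j = 2) ∧ ¬(i = 2 ∧ j = 0)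
    | .inl i, .inr k => (k = 0 ∧ (i = 0 ∨ i = 1)) ∨ (k = 1 ∧ (i = 0 ∨ i = 2))
    | .inr _, .inr _ => True
    | _, _ => False

/-- `K₃,₃ʰ`: subdivide two edges of `K₃,₃` at a common endpoint and join
the two subdivision vertices. -/
def K33h : SimpleGraph ((Fin 3 ⊕ Fin 3) ⊕ Fin 2) :=
  SimpleGraph.fromRel fun a b =>
    match a, b with
    | .inl (.inl i), .inl (.inr j) => ¬(i = 0 ∧ (j = 0 ∨ j = 1))
    | .inl (.inr j), .inl (.inl i) => ¬(i = 0 ∧ (j = 0 ∨ j = 1))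
    | .inl x, .inr k =>
        (k = 0 ∧ (x = Sum.inl 0 ∨ x = Sum.inr 0)) ∨ (k = 1 ∧ (x = Sum.inl 0 ∨ x = Sum.inr 1))
    | .inr _, .inr _ => True
    | _, _ => False

/-- `K₅⁺`: `K₅` plus a pendant vertex. -/
def K5plus : SimpleGraph (Option (Fin 5)) :=
  SimpleGraph.fromRel fun a b =>
    match a, b with
    | some i, some j => i ≠ j
    | none, some j => j = 0
    | _, _ => False

/-- `K₃,₃⁺`: `K₃,₃` plus a pendant vertex. -/
def K33plus : SimpleGraph (Option (Fin 3 ⊕ Fin 3)) :=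
  SimpleGraph.fromRel fun a b =>
    match a, b with
    | some (.inl _), some (.inr _) => True
    | none, some x => x = Sum.inl 0
    | _, _ => False

/-- `K₅ ⊕ e`: disjoint union of `K₅` and one edge. -/
def K5oplus : SimpleGraph (Fin 5 ⊕ Fin 2) :=
  SimpleGraph.fromRel fun a b =>
    match a, b with
    | .inl i, .inl j => i ≠ j
    | .inr _, .inr _ => True
    | _, _ => False

/-- `K₃,₃ ⊕ e`: disjoint union of `K₃,₃` and one edge. -/
def K33oplus : SimpleGraph ((Fin 3 ⊕ Fin 3) ⊕ Fin 2) :=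
  SimpleGraph.fromRel fun a b =>
    match a, b with
    | .inl (.inl _), .inl (.inr _) => True
    | .inr _, .inr _ => True
    | _, _ => False

/-- The triad addition of `H` at `x y z`: add a new vertex joined to `x`, `y`, `z`. -/
def triadAddition {U : Type*} (H : SimpleGraph U) (x y z : U) : SimpleGraph (Option U) :=
  SimpleGraph.fromRel fun a b =>
    match a, b with
    | some u, some v => H.Adj u v
    | none, some u => u = x ∨ u = y ∨ u = z
    | _, _ => False

def IsTriadAdditionOf {V U : Type*} (G : SimpleGraph V) (H : SimpleGraph U) : Prop :=
  ∃ x y z : U, x ≠ y ∧ y ≠ z ∧ x ≠ z ∧ Nonempty (G ≃g triadAddition H x y z)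

/-- `G` is obtained from `H` by subdividing (possibly repeatedly) edges of `H`,
all of which lie in `S`. -/
def IsSubdivisionWithin {V W : Type*} (G : SimpleGraph V) (H : SimpleGraph W)
    (S : Set (Sym2 W)) : Prop :=
  ∃ (f : W ↪ V) (p : ∀ ⦃u v : W⦄, H.Adj u v → G.Walk (f u) (f v)),
    (∀ ⦃u v : W⦄ (h : H.Adj u v), (p h).IsPath) ∧
    (∀ ⦃u v : W⦄ (h : H.Adj u v), p h.symm = (p h).reverse) ∧
    (∀ ⦃u v : W⦄ (h : H.Adj u v), s(u, v) ∉ S → (p h).length = 1) ∧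
    (∀ ⦃u v : W⦄ (h : H.Adj u v) (w : W), f w ∈ (p h).support → w = u ∨ w = v) ∧
    (∀ ⦃u v u' v' : W⦄ (h : H.Adj u v) (h' : H.Adj u' v'), s(u, v) ≠ s(u', v') →
      ∀ x : V, x ∈ (p h).support → x ∈ (p h').support → x ∈ Set.range f) ∧
    (∀ x : V, x ∈ Set.range f ∨ ∃ (u v : W) (h : H.Adj u v), x ∈ (p h).support) ∧
    (∀ e ∈ G.edgeSet, ∃ (u v : W) (h : H.Adj u v), e ∈ (p h).edges)

/-- `G` is a subdivision of `H`. -/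
def IsSubdivision {V W : Type*} (G : SimpleGraph V) (H : SimpleGraph W) : Prop :=
  IsSubdivisionWithin G H Set.univ

/-- `D(H)`: the set of edges of `H` whose deletion leaves a planar graph. -/
def Dset {U : Type*} (H : SimpleGraph U) : Set (Sym2 U) :=
  {e | e ∈ H.edgeSet ∧ Planar (H.deleteEdges {e})}

/-- `G[A]` together with all edges between vertices of `T` (`T ⊆ A` intended). -/
def deltaGraph {V : Type*} (G : SimpleGraph V) (A T : Set V) : SimpleGraph A :=
  SimpleGraph.fromRel fun a b => G.Adj a.1 b.1 ∨ (a.1 ∈ T ∧ b.1 ∈ T)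

/-- `G[A]^Y` for the separation `{G[A], G[B]}`: add a new vertex joined to `A ∩ B`. -/
def sepY {V : Type*} (G : SimpleGraph V) (A B : Set V) : SimpleGraph (Option A) :=
  SimpleGraph.fromRel fun x y =>
    match x, y with
    | some a, some b => G.Adj a.1 b.1
    | none, some a => a.1 ∈ A ∩ B
    | _, _ => False

/-- `G₂` is obtained from `G` by adding isolated vertices. -/
def AddIsolated {V₂ V : Type*} (G₂ : SimpleGraph V₂) (G : SimpleGraph V) : Prop :=
  ∃ f : V ↪ V₂, (∀ a b : V, G₂.Adj (f a) (f b) ↔ G.Adj a b) ∧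
    ∀ x : V₂, x ∉ Set.range f → ∀ y : V₂, ¬ G₂.Adj x y

/-- The set of non-isolated vertices of `G` (so `G* = G.induce (core G)`). -/
def core {V : Type*} (G : SimpleGraph V) : Set V := {v | ∃ w, G.Adj v w}

/-- `G` is obtained from `G'` by 3-summing wheels onto distinct triangles of `G'`. -/
def SumWheelsOnto {V U : Type*} (G : SimpleGraph V) (G' : SimpleGraph U) : Prop :=
  ∃ (g : U ↪ V) (k : ℕ) (Wp : Fin k → Set V) (T : Fin k → Set U),
    (∀ i, (T i).ncard = 3) ∧
    (∀ i, ∀ x ∈ T i, ∀ y ∈ T i, x ≠ y → G'.Adj x y) ∧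
    Function.Injective T ∧
    (∀ i, Disjoint (Wp i) (Set.range ⇑g)) ∧
    (Pairwise fun i j => Disjoint (Wp i) (Wp j)) ∧
    (Set.range ⇑g ∪ ⋃ i, Wp i) = Set.univ ∧
    (∀ i, IsWheel (deltaGraph G (Wp i ∪ ⇑g '' T i) (⇑g '' T i))) ∧
    (∀ a b : U, G.Adj (g a) (g b) → G'.Adj a b) ∧
    (∀ a b : U, G'.Adj a b → (G.Adj (g a) (g b) ∨ ∃ i, a ∈ T i ∧ b ∈ T i)) ∧
    (∀ ⦃x y : V⦄, G.Adj x y → (x ∈ Set.range ⇑g ∧ y ∈ Set.range ⇑g) ∨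
      ∃ i, x ∈ Wp i ∪ ⇑g '' T i ∧ y ∈ Wp i ∪ ⇑g '' T i) ∧
    (∀ i, ∀ x ∈ Wp i, ∀ ⦃y : V⦄, G.Adj x y → y ∈ Wp i ∪ ⇑g '' T i)

/-- `H` has an edge whose deletion and contraction are both nonplanar. -/
def HasBadEdge {V : Type*} (H : SimpleGraph V) : Prop :=
  ∃ u v : V, H.Adj u v ∧ ¬ Planar (H.deleteEdges {s(u, v)}) ∧ ¬ Planar (contractEdge H u v)


namespace Stmt3

section
variable {V W : Type*}

/-- Two vertex sets are joined by an edge. -/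
def Touch (G : SimpleGraph V) (X Y : Set V) : Prop := ∃ x ∈ X, ∃ y ∈ Y, G.Adj x y

/-- The vertex set induces a connected subgraph. -/
abbrev Cn (G : SimpleGraph V) (X : Set V) : Prop := (G.induce X).Connected

variable {G : SimpleGraph V} {H : SimpleGraph W}

theorem Touch.symm {X Y : Set V} (h : Touch G X Y) : Touch G Y X := by
  obtain ⟨x, hx, y, hy, h⟩ := h
  exact ⟨y, hy, x, hx, h.symm⟩

theorem Touch.mono {X Y X' Y' : Set V} (h : Touch G X Y) (hX : X ⊆ X') (hY : Y ⊆ Y') :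
    Touch G X' Y' := by
  obtain ⟨x, hx, y, hy, h⟩ := h
  exact ⟨x, hX hx, y, hY hy, h⟩

theorem Touch.union_left {X Y Z : Set V} (h : Touch G (X ∪ Y) Z) : Touch G X Z ∨ Touch G Y Z := by
  obtain ⟨x, hx | hx, y, hy, h⟩ := h
  · exact Or.inl ⟨x, hx, y, hy, h⟩
  · exact Or.inr ⟨x, hx, y, hy, h⟩

theorem Cn.nonempty {X : Set V} (h : Cn G X) : X.Nonempty := by
  obtain ⟨x, hx⟩ := SimpleGraph.Connected.nonempty h
  exact ⟨x, hx⟩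

theorem Cn.union {X Y : Set V} (hX : Cn G X) (hY : Cn G Y) (h : Touch G X Y) : Cn G (X ∪ Y) := by
  obtain ⟨x, hx, y, hy, h⟩ := h
  exact connected_induce_union hX.preconnected hY.preconnected hx hy h

theorem cn_singleton (x : V) : Cn G {x} := by
  rw [Cn, connected_iff_exists_forall_reachable]
  refine ⟨⟨x, rfl⟩, ?_⟩
  rintro ⟨y, rfl⟩
  exact Reachable.refl _

theorem Cn.crossing {X S : Set V} (hX : Cn G X) {s t : V} (hs : s ∈ X) (hsS : s ∈ S)
    (ht : t ∈ X) (htS : t ∉ S) : ∃ u ∈ X, ∃ v ∈ X, u ∈ S ∧ v ∉ S ∧ G.Adj u v := by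
  obtain ⟨p⟩ := hX.preconnected ⟨s, hs⟩ ⟨t, ht⟩
  obtain ⟨d, -, h1, h2⟩ := p.exists_boundary_dart (Subtype.val ⁻¹' S) hsS htS
  exact ⟨d.fst, d.fst.2, d.snd, d.snd.2, h1, h2, d.adj⟩

theorem split_aux [Finite V] {X : Set V} (hX : Cn G X) (n : ℕ) : ∀ P Q : Set V,
    P ⊆ X → Q ⊆ X → Disjoint P Q → Cn G P → Cn G Q → (P ∪ Q)ᶜ.ncard = n →
    ∃ P' Q' : Set V, P ⊆ P' ∧ Q ⊆ Q' ∧ P' ∪ Q' = X ∧ Disjoint P' Q' ∧ Cn G P' ∧ Cn G Q' := by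
  induction n using Nat.strong_induction_on with
  | _ n ih =>
    intro P Q hP hQ hd cP cQ hn
    by_cases h : P ∪ Q = X
    · exact ⟨P, Q, subset_rfl, subset_rfl, h, hd, cP, cQ⟩
    have hsub : P ∪ Q ⊆ X := Set.union_subset hP hQ
    obtain ⟨t, htX, ht⟩ : ∃ t ∈ X, t ∉ P ∪ Q := by
      by_contra hc
      push Not at hc
      exact h (hsub.antisymm hc)
    obtain ⟨s, hs⟩ := cP.nonempty
    obtain ⟨u, -, v, hv, hu, hv', huv⟩ := hX.crossing (hP hs) (Or.inl hs : s ∈ P ∪ Q) htX ht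
    have hlt : ∀ Z : Set V, P ∪ Q ⊆ Z → v ∈ Z → Zᶜ.ncard < n := by
      intro Z hZ hvZ
      rw [← hn]
      exact Set.ncard_lt_ncard ⟨Set.compl_subset_compl.2 hZ, fun hh => hh hv' hvZ⟩ (Set.toFinite _)
    have hvP : v ∉ P := fun h => hv' (Or.inl h)
    have hvQ : v ∉ Q := fun h => hv' (Or.inr h)
    rcases hu with hu | hu
    · obtain ⟨P', Q', h1, h2, h3⟩ := ih _ (hlt (P ∪ {v} ∪ Q) (by intro z; simp; tauto) (by simp)) (P ∪ {v}) Q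
        (by simp [hP, hv, Set.insert_subset_iff]) hQ
        (by simp [hd, hvQ]) (cP.union (cn_singleton v) ⟨u, hu, v, rfl, huv⟩) cQ rfl
      exact ⟨P', Q', fun z hz => h1 (Or.inl hz), h2, h3⟩
    · obtain ⟨P', Q', h1, h2, h3⟩ := ih _ (hlt (P ∪ (Q ∪ {v})) (by intro z; simp; tauto) (by simp)) P (Q ∪ {v})
        hP (by simp [hQ, hv, Set.insert_subset_iff])
        (by simp [hd, hvP]) cP (cQ.union (cn_singleton v) ⟨u, hu, v, rfl, huv⟩) rfl
      exact ⟨P', Q', h1, fun z hz => h2 (Or.inl hz), h3⟩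

/-- A partition of a connected set into two connected parts. -/
structure Split (G : SimpleGraph V) (X P Q : Set V) : Prop where
  un : P ∪ Q = X
  dj : Disjoint P Q
  cP : Cn G P
  cQ : Cn G Q
  tc : Touch G P Q

theorem Split.symm {X P Q : Set V} (h : Split G X P Q) : Split G X Q P :=
  ⟨by rw [Set.union_comm, h.un], h.dj.symm, h.cQ, h.cP, h.tc.symm⟩

theorem Split.left {X P Q : Set V} (h : Split G X P Q) : P ⊆ X := by
  rw [← h.un]; exact Set.subset_union_left

theorem Split.right {X P Q : Set V} (h : Split G X P Q) : Q ⊆ X := h.symm.left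

theorem exists_split [Finite V] {X : Set V} (hX : Cn G X) {x y : V} (hx : x ∈ X) (hy : y ∈ X)
    (hxy : x ≠ y) : ∃ P Q, Split G X P Q ∧ x ∈ P ∧ y ∈ Q := by
  obtain ⟨P, Q, h1, h2, h3, h4, h5, h6⟩ := split_aux hX _ {x} {y} (by simpa) (by simpa)
    (by simpa using hxy) (cn_singleton x) (cn_singleton y) rfl
  have hxP : x ∈ P := h1 rfl
  have hyQ : y ∈ Q := h2 rfl
  refine ⟨P, Q, ⟨h3, h4, h5, h6, ?_⟩, hxP, hyQ⟩
  obtain ⟨u, -, v, hv, hu, hv', huv⟩ := hX.crossing hx hxP hy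
    (fun h => Set.disjoint_left.1 h4 h hyQ)
  rw [← h3] at hv
  exact ⟨u, hu, v, hv.resolve_left hv', huv⟩

theorem cut [Finite V] (hK : KConnected G 3) {S : Set V} {p q s t : V} (hs : s ∈ S) (hp : p ∉ S)
    (hq : q ∉ S) (ht : t ∉ S) (htp : t ≠ p) (htq : t ≠ q)
    (h : ∀ u ∈ S, ∀ v, v ∉ S → G.Adj u v → v = p ∨ v = q) : False := by
  have h1 : Cn G ({p, q} : Set V)ᶜ := by
    apply hK.2
    have := Set.ncard_insert_le p {q}
    rw [Set.ncard_singleton] at this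
    omega
  obtain ⟨u, hu, v, hv, hu', hv', huv⟩ := h1.crossing (S := S) (s := s) (t := t) (by grind) hs
    (by grind) ht
  have := h u hu' v hv' huv
  simp at hv
  tauto

/-- A minor model. -/
structure Mod (H : SimpleGraph W) (G : SimpleGraph V) (B : W → Set V) : Prop where
  conn : ∀ w, Cn G (B w)
  disj : ∀ i j, i ≠ j → Disjoint (B i) (B j)
  adj : ∀ i j, H.Adj i j → Touch G (B i) (B j)

open Classical in
theorem Mod.upd {H' : SimpleGraph W} {B : W → Set V} (hB : Mod H' G B) {a : W} {A : Set V}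
    (hA : Cn G A) (hd : ∀ w, w ≠ a → Disjoint A (B w))
    (hH : ∀ i j, i ≠ a → j ≠ a → H.Adj i j → H'.Adj i j)
    (ht : ∀ w, H.Adj a w → Touch G A (B w)) : Mod H G (Function.update B a A) := by
  refine ⟨fun w => ?_, fun i j hij => ?_, fun i j hij => ?_⟩
  · by_cases h : w = a
    · subst h; simpa using hA
    · simpa [h] using hB.conn w
  · by_cases hi : i = a
    · subst hi; simpa [hij.symm] using hd j hij.symm
    · by_cases hj : j = a
      · subst hj; simpa [hij] using (hd i hij).symm
      · simpa [hi, hj] using hB.disj i j hij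
  · by_cases hi : i = a
    · subst hi; simpa [hij.ne.symm] using ht j hij
    · by_cases hj : j = a
      · subst hj; simpa [hij.ne] using (ht i hij.symm).symm
      · simpa [hi, hj] using hB.adj i j (hH i j hi hj hij)

theorem Mod.mono {H' : SimpleGraph W} {B : W → Set V} (hB : Mod H' G B) (h : H ≤ H') :
    Mod H G B := ⟨hB.conn, hB.disj, fun i j hij => hB.adj i j (h hij)⟩

/-- Minor model with a further connected set outside of it. -/
structure Ext (H : SimpleGraph W) (G : SimpleGraph V) (B : W → Set V) (C : Set V) : Prop where
  mod : Mod H G B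
  cC : Cn G C
  dC : ∀ i, Disjoint C (B i)

/-- Model of `H` plus a set touching three branch sets. -/
def Good (H : SimpleGraph W) (G : SimpleGraph V) : Prop :=
  ∃ B C, Ext H G B C ∧ ∃ i j k, i ≠ j ∧ i ≠ k ∧ j ≠ k ∧
    Touch G C (B i) ∧ Touch G C (B j) ∧ Touch G C (B k)

open Classical in
/-- Replace branch set `a` by `A'` and branch set `c` by `C'`. -/
theorem Mod.upd2 {H' : SimpleGraph W} {B : W → Set V} (hB : Mod H' G B) {a c : W} (hac : a ≠ c)
    {A' C' : Set V} (hA : Cn G A') (hC : Cn G C') (hAC : Disjoint A' C') (htAC : Touch G A' C')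
    (hdA : ∀ w, w ≠ a → Disjoint A' (B w)) (hdC : ∀ w, w ≠ a → w ≠ c → Disjoint C' (B w))
    (hH : ∀ i j, i ≠ a → j ≠ a → H.Adj i j → H'.Adj i j)
    (htA : ∀ w, w ≠ c → H.Adj a w → Touch G A' (B w))
    (hCC : B c ⊆ C') :
    Mod H G (Function.update (Function.update B a A') c C') := by
  have h1 : Mod (H.deleteEdges {s(a, c)}) G (Function.update B a A') := by
    refine hB.upd hA hdA (fun i j hi hj hij => hH i j hi hj ?_) ?_
    · exact (SimpleGraph.deleteEdges_le _) hij
    · intro w hw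
      rw [SimpleGraph.deleteEdges_adj] at hw
      refine htA w ?_ hw.1
      rintro rfl
      simp at hw
  refine h1.upd hC ?_ ?_ ?_
  · intro w hw
    by_cases h : w = a
    · subst h; simpa using hAC.symm
    · simpa [h] using hdC w h hw
  · intro i j hi hj hij
    rw [SimpleGraph.deleteEdges_adj]
    simp [hi, hj, hij]
  · intro w hw
    by_cases h : w = a
    · subst h; simpa using htAC.symm
    · have := (hB.adj c w (hH c w hac.symm h hw)).mono hCC subset_rfl
      simpa [h] using this


/-- The edge `ab` of the model is replaced by two parallel connected sets `C`, `D`. -/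
structure Psi (H : SimpleGraph W) (G : SimpleGraph V) (a b : W) (B : W → Set V) (C D : Set V) :
    Prop where
  ab : H.Adj a b
  mod : Mod (H.deleteEdges {s(a, b)}) G B
  cC : Cn G C
  cD : Cn G D
  dj : Disjoint C D
  dC : ∀ i, Disjoint C (B i)
  dD : ∀ i, Disjoint D (B i)
  tCD : Touch G C D
  tCa : Touch G C (B a)
  tCb : Touch G C (B b)
  tDa : Touch G D (B a)
  tDb : Touch G D (B b)

theorem Psi.swapCD {a b : W} {B : W → Set V} {C D : Set V} (h : Psi H G a b B C D) :
    Psi H G a b B D C :=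
  ⟨h.ab, h.mod, h.cD, h.cC, h.dj.symm, h.dD, h.dC, h.tCD.symm, h.tDa, h.tDb, h.tCa, h.tCb⟩

theorem Psi.swapab {a b : W} {B : W → Set V} {C D : Set V} (h : Psi H G a b B C D) :
    Psi H G b a B C D :=
  ⟨h.ab.symm, by rw [Sym2.eq_swap]; exact h.mod, h.cC, h.cD, h.dj, h.dC, h.dD, h.tCD, h.tCb,
    h.tCa, h.tDb, h.tDa⟩

theorem del_of {a b i j : W} (h : H.Adj i j) (h1 : ¬ (i = a ∧ j = b)) (h2 : ¬ (i = b ∧ j = a)) :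
    (H.deleteEdges {s(a, b)}).Adj i j := by
  rw [SimpleGraph.deleteEdges_adj]
  refine ⟨h, ?_⟩
  simp
  tauto

theorem Psi.third {a b w : W} {B : W → Set V} {C D : Set V} (h : Psi H G a b B C D)
    (ha : w ≠ a) (hb : w ≠ b) (ht : Touch G C (B w)) : Good H G := by
  classical
  have hba := h.ab.ne.symm
  refine ⟨Function.update B a (B a ∪ D), C, ⟨?_, h.cC, ?_⟩, a, b, w, h.ab.ne, ha.symm, hb.symm,
    ?_, ?_, ?_⟩
  · refine h.mod.upd ((h.mod.conn a).union h.cD h.tDa.symm) ?_ ?_ ?_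
    · intro w hw
      rw [Set.disjoint_union_left]
      exact ⟨h.mod.disj _ _ hw.symm, h.dD w⟩
    · intro i j hi hj hij
      exact del_of hij (by tauto) (by tauto)
    · intro w hw
      by_cases hwb : w = b
      · subst hwb
        exact h.tDb.mono Set.subset_union_right subset_rfl
      · exact (h.mod.adj a w (del_of hw (by tauto) (fun hh => h.ab.ne hh.1))).mono
          Set.subset_union_left subset_rfl
  · intro i
    by_cases hi : i = a
    · subst hi
      simpa using ⟨h.dC i, h.dj⟩
    · simpa [hi] using h.dC i
  · simpa using h.tCa.mono subset_rfl Set.subset_union_left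
  · simpa [hba] using h.tCb
  · simpa [ha] using ht

/-- `Psi` structures that are strictly larger. -/
def Psi.Grows (H : SimpleGraph W) (G : SimpleGraph V) (a b : W) (C D : Set V) : Prop :=
  ∃ B' C' D', Psi H G a b B' C' D' ∧ C ∪ D ⊂ C' ∪ D'

theorem Psi.Grows.swapCD {a b : W} {C D : Set V} (h : Psi.Grows H G a b C D) :
    Psi.Grows H G a b D C := by
  obtain ⟨B', C', D', h1, h2⟩ := h
  exact ⟨B', C', D', h1, by rwa [Set.union_comm D C]⟩

theorem Psi.Grows.swapab {a b : W} {C D : Set V} (h : Psi.Grows H G a b C D) :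
    Psi.Grows H G b a C D := by
  obtain ⟨B', C', D', h1, h2⟩ := h
  exact ⟨B', C', D', h1.swapab, h2⟩

theorem ssub_union {C D : Set V} {v : V} (hC : v ∉ C) (hD : v ∉ D) {C' D' : Set V} (h1 : C ⊆ C')
    (h2 : D ⊆ D') (h3 : v ∈ C' ∪ D') : C ∪ D ⊂ C' ∪ D' :=
  ⟨Set.union_subset_union h1 h2, fun h => (h h3).elim hC hD⟩

theorem Psi.outside {a b : W} {B : W → Set V} {C D : Set V} (h : Psi H G a b B C D)
    {u v : V} (hu : u ∈ C) (huv : G.Adj u v) (hvC : v ∉ C) (hvD : v ∉ D)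
    (hvB : ∀ w, v ∉ B w) : Psi.Grows H G a b C D := by
  refine ⟨B, C ∪ {v}, D, ⟨h.ab, h.mod, h.cC.union (cn_singleton v) ⟨u, hu, v, rfl, huv⟩, h.cD,
    ?_, ?_, h.dD, h.tCD.mono Set.subset_union_left subset_rfl,
    h.tCa.mono Set.subset_union_left subset_rfl,
    h.tCb.mono Set.subset_union_left subset_rfl, h.tDa, h.tDb⟩, ?_⟩
  · rw [Set.disjoint_union_left]
    exact ⟨h.dj, by simpa using hvD⟩
  · intro i
    rw [Set.disjoint_union_left]
    exact ⟨h.dC i, by simpa using hvB i⟩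
  · exact ssub_union hvC hvD Set.subset_union_left subset_rfl (by simp)

theorem Psi.split {a b c : W} {B : W → Set V} {C D P Q : Set V} (h : Psi H G a b B C D)
    (hs : Split G (B a) P Q) (hPC : Touch G C P) (hQD : Touch G D Q) (hac : H.Adj a c)
    (hcb : c ≠ b) (hP : ∀ w, H.Adj a w ∧ w ≠ b → w ≠ c → Touch G P (B w)) :
    Good H G ∨ Psi.Grows H G a b C D := by
  classical
  have hba : b ≠ a := h.ab.ne.symm
  have hca : c ≠ a := hac.ne.symm
  have hPd : ∀ w, w ≠ a → Disjoint P (B w) := fun w hw =>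
    (h.mod.disj a w hw.symm).mono_left hs.left
  have hQd : ∀ w, w ≠ a → Disjoint Q (B w) := fun w hw =>
    (h.mod.disj a w hw.symm).mono_left hs.right
  have hCP : Disjoint C P := (h.dC a).mono_right hs.left
  have hCQ : Disjoint C Q := (h.dC a).mono_right hs.right
  have hDP : Disjoint D P := (h.dD a).mono_right hs.left
  have hDQ : Disjoint D Q := (h.dD a).mono_right hs.right
  by_cases hPc : Touch G P (B c)
  · right
    refine ⟨Function.update B a P, C, D ∪ Q, ⟨h.ab, ?_, h.cC, h.cD.union hs.cQ hQD, ?_, ?_, ?_,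
      h.tCD.mono subset_rfl Set.subset_union_left, ?_, ?_, ?_, ?_⟩, ?_⟩
    · refine h.mod.upd hs.cP hPd (fun _ _ _ _ h => h) ?_
      intro w hw
      rw [SimpleGraph.deleteEdges_adj] at hw
      have hwb : w ≠ b := by
        rintro rfl
        simp at hw
      by_cases hwc : w = c
      · subst hwc; exact hPc
      · exact hP w ⟨hw.1, hwb⟩ hwc
    · rw [Set.disjoint_union_right]; exact ⟨h.dj, hCQ⟩
    · intro i
      by_cases hi : i = a
      · subst hi; simpa using hCP
      · simpa [hi] using h.dC i
    · intro i
      by_cases hi : i = a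
      · subst hi; simpa using ⟨hDP, hs.dj.symm⟩
      · simpa [hi] using ⟨h.dD i, hQd i hi⟩
    · simpa using hPC
    · simpa [hba] using h.tCb
    · simpa using hs.tc.symm.mono Set.subset_union_right subset_rfl
    · simpa [hba] using h.tDb.mono Set.subset_union_left subset_rfl
    · obtain ⟨y, hy⟩ := hs.cQ.nonempty
      exact ssub_union (v := y) (fun hh => Set.disjoint_left.1 hCQ hh hy)
        (fun hh => Set.disjoint_left.1 hDQ hh hy) subset_rfl Set.subset_union_left
        (Or.inr (Or.inr hy))
  · left
    have hQc : Touch G Q (B c) := by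
      have h1 := h.mod.adj a c (del_of hac (by tauto) (by tauto))
      rw [← hs.un] at h1
      exact h1.union_left.resolve_left hPc
    refine ⟨Function.update (Function.update B a (P ∪ C)) c (B c ∪ Q), D, ⟨?_, h.cD, ?_⟩,
      a, b, c, hba.symm, hca.symm, hcb.symm, ?_, ?_, ?_⟩
    · refine h.mod.upd2 hca.symm (hs.cP.union h.cC hPC.symm)
        ((h.mod.conn c).union hs.cQ hQc.symm) ?_ ?_ ?_ ?_ ?_ ?_ Set.subset_union_left
      · simp only [Set.disjoint_union_left, Set.disjoint_union_right]
        exact ⟨⟨hPd c hca, h.dC c⟩, hs.dj, hCQ⟩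
      · exact hs.tc.mono Set.subset_union_left Set.subset_union_right
      · intro w hw
        simpa using ⟨hPd w hw, h.dC w⟩
      · intro w hwa hwc
        simpa using ⟨h.mod.disj c w hwc.symm, hQd w hwa⟩
      · intro i j hi hj hij
        exact del_of hij (by tauto) (by tauto)
      · intro w hwc hw
        by_cases hwb : w = b
        · subst hwb; exact h.tCb.mono Set.subset_union_right subset_rfl
        · exact (hP w ⟨hw, hwb⟩ hwc).mono Set.subset_union_left subset_rfl
    · intro i
      by_cases hi : i = c
      · subst hi; simpa using ⟨h.dD i, hDQ⟩
      · by_cases hi' : i = a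
        · subst hi'; simpa [hi] using ⟨hDP, h.dj.symm⟩
        · simpa [hi, hi'] using h.dD i
    · simpa [hca.symm] using h.tCD.symm.mono subset_rfl Set.subset_union_right
    · simpa [hcb.symm, hba] using h.tDb
    · simpa using hQD.mono subset_rfl Set.subset_union_right

theorem pick {N p q : W → Prop} (h0 : ∃ c, N c) (h : ∀ w, N w → p w ∨ q w) :
    (∃ c, N c ∧ ∀ w, N w → w ≠ c → p w) ∨ (∃ c, N c ∧ ∀ w, N w → w ≠ c → q w) ∨
    ∃ c1 c2 c3 c4, N c1 ∧ N c2 ∧ N c3 ∧ N c4 ∧ p c1 ∧ p c2 ∧ q c3 ∧ q c4 ∧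
      c1 ≠ c2 ∧ c1 ≠ c3 ∧ c1 ≠ c4 ∧ c2 ≠ c3 ∧ c2 ≠ c4 ∧ c3 ≠ c4 := by
  have aux : ∀ p : W → Prop, (¬ ∃ c, N c ∧ ∀ w, N w → w ≠ c → p w) →
      ∃ c d, N c ∧ N d ∧ c ≠ d ∧ ¬ p c ∧ ¬ p d := by
    intro p hp
    push Not at hp
    obtain ⟨c0, hc0⟩ := h0
    obtain ⟨c, hc, -, hpc⟩ := hp c0 hc0
    obtain ⟨d, hd, hdc, hpd⟩ := hp c hc
    exact ⟨c, d, hc, hd, hdc.symm, hpc, hpd⟩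
  by_cases hp : ∃ c, N c ∧ ∀ w, N w → w ≠ c → p w
  · exact Or.inl hp
  by_cases hq : ∃ c, N c ∧ ∀ w, N w → w ≠ c → q w
  · exact Or.inr (Or.inl hq)
  obtain ⟨c3, c4, h3, h4, h34, hp3, hp4⟩ := aux p hp
  obtain ⟨c1, c2, h1, h2, h12, hq1, hq2⟩ := aux q hq
  have q3 := (h c3 h3).resolve_left hp3
  have q4 := (h c4 h4).resolve_left hp4
  have p1 := (h c1 h1).resolve_right hq1
  have p2 := (h c2 h2).resolve_right hq2
  refine Or.inr (Or.inr ⟨c1, c2, c3, c4, h1, h2, h3, h4, p1, p2, q3, q4, h12, ?_, ?_, ?_, ?_, h34⟩)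
  all_goals
    rintro rfl
    contradiction

/-- Degrees are at most four. -/
def Hd (H : SimpleGraph W) : Prop := ∀ a b c1 c2 c3 c4, H.Adj a b → H.Adj a c1 → H.Adj a c2 →
  H.Adj a c3 → H.Adj a c4 → c1 ≠ b → c2 ≠ b → c3 ≠ b → c4 ≠ b → c1 ≠ c2 → c1 ≠ c3 → c1 ≠ c4 →
  c2 ≠ c3 → c2 ≠ c4 → c3 ≠ c4 → False

/-- Degrees are at least two. -/
def Hn (H : SimpleGraph W) : Prop := ∀ a b, ∃ c, H.Adj a c ∧ c ≠ b

theorem Psi.two [Finite V] (hd : Hd H) (hn : Hn H) {a b : W} {B : W → Set V} {C D : Set V}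
    (h : Psi H G a b B C D) {x y : V} (hx : x ∈ B a) (hy : y ∈ B a) (hxy : x ≠ y)
    (hxS : ∃ u ∈ C ∪ D, G.Adj u x) (hyS : ∃ u ∈ C ∪ D, G.Adj u y) :
    Good H G ∨ Psi.Grows H G a b C D := by
  obtain ⟨P, Q, hs, hxP, hyQ⟩ := exists_split (h.mod.conn a) hx hy hxy
  have hPS : Touch G C P ∨ Touch G D P := by
    obtain ⟨u, hu, hux⟩ := hxS
    exact Touch.union_left ⟨u, hu, x, hxP, hux⟩
  have hQS : Touch G C Q ∨ Touch G D Q := by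
    obtain ⟨u, hu, hux⟩ := hyS
    exact Touch.union_left ⟨u, hu, y, hyQ, hux⟩
  have hCS : Touch G C P ∨ Touch G C Q := by
    have := h.tCa
    rw [← hs.un] at this
    exact this.symm.union_left.imp Touch.symm Touch.symm
  have hDS : Touch G D P ∨ Touch G D Q := by
    have := h.tDa
    rw [← hs.un] at this
    exact this.symm.union_left.imp Touch.symm Touch.symm
  have key : (Touch G C P ∧ Touch G D Q) ∨ (Touch G D P ∧ Touch G C Q) := by tauto
  obtain hp | hq | ⟨c1, c2, c3, c4, h1, h2, h3, h4, -, -, -, -, h5, h6, h7, h8, h9, h10⟩ :=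
    pick (N := fun w => H.Adj a w ∧ w ≠ b) (p := fun w => Touch G P (B w))
      (q := fun w => Touch G Q (B w)) (hn a b) (by
        rintro w ⟨hw, hwb⟩
        have h1 := h.mod.adj a w (del_of hw (by tauto) (fun hh => h.ab.ne hh.1))
        rw [← hs.un] at h1
        exact h1.union_left)
  · obtain ⟨c, ⟨hac, hcb⟩, hc⟩ := hp
    rcases key with ⟨k1, k2⟩ | ⟨k1, k2⟩
    · exact h.split hs k1 k2 hac hcb hc
    · exact (h.swapCD.split hs k1 k2 hac hcb hc).imp id Psi.Grows.swapCD
  · obtain ⟨c, ⟨hac, hcb⟩, hc⟩ := hq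
    rcases key with ⟨k1, k2⟩ | ⟨k1, k2⟩
    · exact (h.swapCD.split hs.symm k2 k1 hac hcb hc).imp id Psi.Grows.swapCD
    · exact h.split hs.symm k2 k1 hac hcb hc
  · exact (hd a b c1 c2 c3 c4 h.ab h1.1 h2.1 h3.1 h4.1 h1.2 h2.2 h3.2 h4.2 h5 h6 h7 h8 h9 h10).elim

/-- If no two attachments lie in `X`, there is a vertex of `X` containing all of them. -/
theorem one_of {X : Set V} (hX : X.Nonempty) {R : V → Prop}
    (h : ∀ x ∈ X, ∀ y ∈ X, x ≠ y → R x → R y → False) : ∃ p ∈ X, ∀ x ∈ X, R x → x = p := by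
  by_cases h1 : ∃ p ∈ X, R p
  · obtain ⟨p, hp, hR⟩ := h1
    refine ⟨p, hp, fun x hx hRx => ?_⟩
    by_contra hne
    exact h x hx p hp hne hRx hR
  · obtain ⟨p, hp⟩ := hX
    exact ⟨p, hp, fun x hx hRx => (h1 ⟨x, hx, hRx⟩).elim⟩

theorem Psi.step [Finite V] (hK : KConnected G 3) (hd : Hd H) (hn : Hn H) {a b : W}
    {B : W → Set V} {C D : Set V} (h : Psi H G a b B C D) :
    Good H G ∨ Psi.Grows H G a b C D := by
  by_contra hcon
  have hS : ∀ w, Disjoint (C ∪ D) (B w) := fun w => Set.disjoint_union_left.2 ⟨h.dC w, h.dD w⟩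
  obtain ⟨p, hp, hp'⟩ := one_of (h.mod.conn a).nonempty (R := fun x => ∃ u ∈ C ∪ D, G.Adj u x)
    (fun x hx y hy hxy h1 h2 => hcon (h.two hd hn hx hy hxy h1 h2))
  obtain ⟨q, hq, hq'⟩ := one_of (h.mod.conn b).nonempty (R := fun x => ∃ u ∈ C ∪ D, G.Adj u x)
    (fun x hx y hy hxy h1 h2 => hcon
      ((h.swapab.two hd hn hx hy hxy h1 h2).imp id Psi.Grows.swapab))
  obtain ⟨c, hac, hcb⟩ := hn a b
  obtain ⟨t, ht⟩ := (h.mod.conn c).nonempty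
  obtain ⟨s, hs⟩ := h.cC.nonempty
  have out : ∀ w x, x ∈ B w → x ∉ C ∪ D := fun w x hx hxS => Set.disjoint_left.1 (hS w) hxS hx
  refine cut hK (S := C ∪ D) (Or.inl hs) (out a p hp) (out b q hq) (out c t ht) ?_ ?_ ?_
  · rintro rfl
    exact Set.disjoint_left.1 (h.mod.disj a c hac.ne) hp ht
  · rintro rfl
    exact Set.disjoint_left.1 (h.mod.disj b c hcb.symm) hq ht
  · intro u hu v hv huv
    by_cases hB : ∃ w, v ∈ B w
    · obtain ⟨w, hw⟩ := hB
      by_cases hwa : w = a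
      · subst hwa; exact Or.inl (hp' v hw ⟨u, hu, huv⟩)
      by_cases hwb : w = b
      · subst hwb; exact Or.inr (hq' v hw ⟨u, hu, huv⟩)
      rcases hu with hu | hu
      · exact (hcon (Or.inl (h.third hwa hwb ⟨u, hu, v, hw, huv⟩))).elim
      · exact (hcon (Or.inl (h.swapCD.third hwa hwb ⟨u, hu, v, hw, huv⟩))).elim
    · push Not at hB
      have hvC : v ∉ C := fun h => hv (Or.inl h)
      have hvD : v ∉ D := fun h => hv (Or.inr h)
      rcases hu with hu | hu
      · exact (hcon (Or.inr (h.outside hu huv hvC hvD hB))).elim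
      · exact (hcon (Or.inr (h.swapCD.outside hu huv hvD hvC hB).swapCD)).elim

theorem compl_lt [Finite V] {X Y : Set V} (h : X ⊂ Y) : Yᶜ.ncard < Xᶜ.ncard :=
  Set.ncard_lt_ncard ⟨Set.compl_subset_compl.2 h.1, fun hh => h.2 (Set.compl_subset_compl.1 hh)⟩ (Set.toFinite _)

theorem Psi.good [Finite V] (hK : KConnected G 3) (hd : Hd H) (hn : Hn H) {a b : W} :
    ∀ (n : ℕ) (B : W → Set V) (C D : Set V), Psi H G a b B C D → (C ∪ D)ᶜ.ncard = n →
      Good H G := by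
  intro n
  induction n using Nat.strong_induction_on with
  | _ n ih =>
    intro B C D h hcard
    rcases h.step hK hd hn with h1 | ⟨B', C', D', h1, h2⟩
    · exact h1
    · exact ih _ (by rw [← hcard]; exact compl_lt h2) B' C' D' h1 rfl

/-- A model with strictly larger outside set exists. -/
def EGrows (H : SimpleGraph W) (G : SimpleGraph V) (C : Set V) : Prop :=
  ∃ B' C', Ext H G B' C' ∧ C ⊂ C'

theorem Ext.split [Finite V] (hK : KConnected G 3) (hd : Hd H) (hn : Hn H) {a c : W}
    {B : W → Set V} {C P Q : Set V} (h : Ext H G B C)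
    (hs : Split G (B a) P Q) (hCP : Touch G C P) (hCQ : Touch G C Q) (hac : H.Adj a c)
    (hP : ∀ w, H.Adj a w → w ≠ c → Touch G P (B w)) :
    Good H G ∨ EGrows H G C ∨ ((∀ w, w ≠ a → ¬ Touch G C (B w)) ∧
      ∃ B', Ext H G B' C ∧ Touch G C (B' a) ∧ Touch G C (B' c)) := by
  classical
  have hca : c ≠ a := hac.ne.symm
  have hPd : ∀ w, w ≠ a → Disjoint P (B w) := fun w hw =>
    (h.mod.disj a w hw.symm).mono_left hs.left
  have hQd : ∀ w, w ≠ a → Disjoint Q (B w) := fun w hw =>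
    (h.mod.disj a w hw.symm).mono_left hs.right
  have dCP : Disjoint C P := (h.dC a).mono_right hs.left
  have dCQ : Disjoint C Q := (h.dC a).mono_right hs.right
  by_cases hPc : Touch G P (B c)
  · right; left
    refine ⟨Function.update B a P, C ∪ Q, ⟨?_, h.cC.union hs.cQ hCQ, ?_⟩, ?_⟩
    · refine h.mod.upd hs.cP hPd (fun _ _ _ _ h => h) ?_
      intro w hw
      by_cases hwc : w = c
      · subst hwc; exact hPc
      · exact hP w hw hwc
    · intro i
      by_cases hi : i = a
      · subst hi; simpa using ⟨dCP, hs.dj.symm⟩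
      · simpa [hi] using ⟨h.dC i, hQd i hi⟩
    · obtain ⟨y, hy⟩ := hs.cQ.nonempty
      exact ⟨Set.subset_union_left, fun hh => Set.disjoint_left.1 dCQ (hh (Or.inr hy)) hy⟩
  have hQc : Touch G Q (B c) := by
    have h1 := h.mod.adj a c hac
    rw [← hs.un] at h1
    exact h1.union_left.resolve_left hPc
  by_cases hCc : Touch G C (B c)
  · left
    refine Psi.good hK hd hn (a := a) (b := c) _ (Function.update B a P) C Q ⟨hac, ?_, h.cC, hs.cQ,
      dCQ, ?_, ?_, hCQ, ?_, ?_, ?_, ?_⟩ rfl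
    · refine h.mod.upd hs.cP hPd (fun _ _ _ _ h => SimpleGraph.deleteEdges_le _ h) ?_
      intro w hw
      rw [SimpleGraph.deleteEdges_adj] at hw
      refine hP w hw.1 ?_
      rintro rfl
      simp at hw
    · intro i
      by_cases hi : i = a
      · subst hi; simpa using dCP
      · simpa [hi] using h.dC i
    · intro i
      by_cases hi : i = a
      · subst hi; simpa using hs.dj.symm
      · simpa [hi] using hQd i hi
    · simpa using hCP
    · simpa [hca] using hCc
    · simpa using hs.tc.symm
    · simpa [hca] using hQc
  have hE : Ext H G (Function.update (Function.update B a P) c (B c ∪ Q)) C := by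
    refine ⟨?_, h.cC, ?_⟩
    · refine h.mod.upd2 hca.symm hs.cP
        ((h.mod.conn c).union hs.cQ hQc.symm) ?_ ?_ hPd ?_ (fun _ _ _ _ h => h)
          (fun w hw hh => hP w hh hw) Set.subset_union_left
      · simpa using ⟨hPd c hca, hs.dj⟩
      · exact hs.tc.mono subset_rfl Set.subset_union_right
      · intro w hwa hwc
        simpa using ⟨h.mod.disj c w hwc.symm, hQd w hwa⟩
    · intro i
      by_cases hi : i = c
      · subst hi; simpa using ⟨h.dC i, dCQ⟩
      · by_cases hi' : i = a
        · subst hi'; simpa [hi] using dCP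
        · simpa [hi, hi'] using h.dC i
  have ha : Touch G C (Function.update (Function.update B a P) c (B c ∪ Q) a) := by
    simpa [hca.symm] using hCP
  have hc : Touch G C (Function.update (Function.update B a P) c (B c ∪ Q) c) := by
    simpa using hCQ.mono subset_rfl Set.subset_union_right
  by_cases hw : ∃ w, w ≠ a ∧ Touch G C (B w)
  · obtain ⟨w, hwa, hw⟩ := hw
    left
    have hwc : w ≠ c := by
      rintro rfl
      exact hCc hw
    exact ⟨_, C, hE, a, c, w, hca.symm, hwa.symm, hwc.symm, ha, hc, by simpa [hwa, hwc] using hw⟩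
  · push Not at hw
    exact Or.inr (Or.inr ⟨hw, _, hE, ha, hc⟩)

/-- What to do with a balanced splitting of a branch set. -/
def Alt (H : SimpleGraph W) (G : SimpleGraph V) (T : Prop) : Prop :=
  ∀ (B : W → Set V) (C : Set V), Ext H G B C → ∀ (a : W) (P Q : Set V), Split G (B a) P Q →
    ∀ c1 c2 c3 c4, H.Adj a c1 → H.Adj a c2 → H.Adj a c3 → H.Adj a c4 →
    Touch G P (B c1) → Touch G P (B c2) → Touch G Q (B c3) → Touch G Q (B c4) →
    c1 ≠ c2 → c1 ≠ c3 → c1 ≠ c4 → c2 ≠ c3 → c2 ≠ c4 → c3 ≠ c4 → T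

theorem Ext.two [Finite V] (hK : KConnected G 3) (hd : Hd H) (hn : Hn H) {T : Prop}
    (hT : Alt H G T) {a : W} {B : W → Set V} {C : Set V} (h : Ext H G B C)
    {x y : V} (hx : x ∈ B a) (hy : y ∈ B a) (hxy : x ≠ y)
    (hxC : ∃ u ∈ C, G.Adj u x) (hyC : ∃ u ∈ C, G.Adj u y) :
    T ∨ Good H G ∨ EGrows H G C ∨ ((∀ w, w ≠ a → ¬ Touch G C (B w)) ∧
      ∃ B' c, c ≠ a ∧ Ext H G B' C ∧ Touch G C (B' a) ∧ Touch G C (B' c)) := by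
  obtain ⟨P, Q, hs, hxP, hyQ⟩ := exists_split (h.mod.conn a) hx hy hxy
  have hCP : Touch G C P := by
    obtain ⟨u, hu, hux⟩ := hxC
    exact ⟨u, hu, x, hxP, hux⟩
  have hCQ : Touch G C Q := by
    obtain ⟨u, hu, hux⟩ := hyC
    exact ⟨u, hu, y, hyQ, hux⟩
  obtain hp | hq | ⟨c1, c2, c3, c4, h1, h2, h3, h4, p1, p2, p3, p4, h5, h6, h7, h8, h9, h10⟩ :=
    pick (N := fun w => H.Adj a w) (p := fun w => Touch G P (B w))
      (q := fun w => Touch G Q (B w)) ((hn a a).imp fun _ h => h.1) (by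
        intro w hw
        have h1 := h.mod.adj a w hw
        rw [← hs.un] at h1
        exact h1.union_left)
  · obtain ⟨c, hac, hc⟩ := hp
    obtain h1 | h1 | ⟨h1, B', h2⟩ := h.split hK hd hn hs hCP hCQ hac hc
    · exact Or.inr (Or.inl h1)
    · exact Or.inr (Or.inr (Or.inl h1))
    · exact Or.inr (Or.inr (Or.inr ⟨h1, B', c, hac.ne.symm, h2⟩))
  · obtain ⟨c, hac, hc⟩ := hq
    obtain h1 | h1 | ⟨h1, B', h2⟩ := h.split hK hd hn hs.symm hCQ hCP hac hc
    · exact Or.inr (Or.inl h1)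
    · exact Or.inr (Or.inr (Or.inl h1))
    · exact Or.inr (Or.inr (Or.inr ⟨h1, B', c, hac.ne.symm, h2⟩))
  · exact Or.inl (hT B C h a P Q hs c1 c2 c3 c4 h1 h2 h3 h4 p1 p2 p3 p4 h5 h6 h7 h8 h9 h10)

theorem Ext.step [Finite V] [Nonempty W] (hK : KConnected G 3) (hd : Hd H) (hn : Hn H) {T : Prop}
    (hT : Alt H G T) {B : W → Set V} {C : Set V} (h : Ext H G B C) :
    T ∨ Good H G ∨ EGrows H G C ∨ ∃ a, ((∀ w, w ≠ a → ¬ Touch G C (B w)) ∧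
      ∃ B' c, c ≠ a ∧ Ext H G B' C ∧ Touch G C (B' a) ∧ Touch G C (B' c)) := by
  by_contra hcon
  push Not at hcon
  obtain ⟨nT, nG, nE, nF⟩ := hcon
  obtain ⟨i, j, hij⟩ : ∃ i j, ∀ w, Touch G C (B w) → w = i ∨ w = j := by
    by_cases h1 : ∃ i, Touch G C (B i)
    · obtain ⟨i, hi⟩ := h1
      by_cases h2 : ∃ j, j ≠ i ∧ Touch G C (B j)
      · obtain ⟨j, hj, hj'⟩ := h2
        refine ⟨i, j, fun w hw => ?_⟩
        by_contra hne
        push Not at hne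
        exact nG ⟨B, C, h, i, j, w, hj.symm, hne.1.symm, hne.2.symm, hi, hj', hw⟩
      · push Not at h2
        refine ⟨i, i, fun w hw => Or.inl ?_⟩
        by_contra hne
        exact h2 w hne hw
    · obtain ⟨i⟩ := ‹Nonempty W›
      exact ⟨i, i, fun w hw => (h1 ⟨w, hw⟩).elim⟩
  have one : ∀ a, ∃ p ∈ B a, ∀ x ∈ B a, (∃ u ∈ C, G.Adj u x) → x = p := by
    intro a
    refine one_of (h.mod.conn a).nonempty (R := fun x => ∃ u ∈ C, G.Adj u x) ?_
    intro x hx y hy hxy h1 h2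
    obtain h3 | h3 | h3 | ⟨h3, B', c, h4, h5, h6, h7⟩ := h.two hK hd hn hT hx hy hxy h1 h2
    · exact nT h3
    · exact nG h3
    · exact nE h3
    · exact nF a h3 B' c h4 h5 h6 h7
  obtain ⟨p, hp, hp'⟩ := one i
  obtain ⟨q, hq, hq'⟩ := one j
  obtain ⟨c, hac, hcb⟩ := hn i j
  obtain ⟨t, ht⟩ := (h.mod.conn c).nonempty
  obtain ⟨s, hs⟩ := h.cC.nonempty
  have out : ∀ w x, x ∈ B w → x ∉ C := fun w x hx hxS => Set.disjoint_left.1 (h.dC w) hxS hx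
  refine cut hK (S := C) hs (out i p hp) (out j q hq) (out c t ht) ?_ ?_ ?_
  · rintro rfl
    exact Set.disjoint_left.1 (h.mod.disj i c hac.ne) hp ht
  · rintro rfl
    exact Set.disjoint_left.1 (h.mod.disj j c hcb.symm) hq ht
  · intro u hu v hv huv
    by_cases hB : ∃ w, v ∈ B w
    · obtain ⟨w, hw⟩ := hB
      rcases hij w ⟨u, hu, v, hw, huv⟩ with rfl | rfl
      · exact Or.inl (hp' v hw ⟨u, hu, huv⟩)
      · exact Or.inr (hq' v hw ⟨u, hu, huv⟩)
    · push Not at hB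
      refine (nE ⟨B, C ∪ {v}, ⟨h.mod, h.cC.union (cn_singleton v) ⟨u, hu, v, rfl, huv⟩, ?_⟩,
        Set.subset_union_left, fun hh => hv (hh (Or.inr rfl))⟩).elim
      intro i
      rw [Set.disjoint_union_left]
      exact ⟨h.dC i, by simpa using hB i⟩

theorem Ext.good [Finite V] [Nonempty W] (hK : KConnected G 3) (hd : Hd H) (hn : Hn H) {T : Prop}
    (hT : Alt H G T) : ∀ (n : ℕ) (B : W → Set V) (C : Set V), Ext H G B C → Cᶜ.ncard = n →
      T ∨ Good H G := by
  intro n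
  induction n using Nat.strong_induction_on with
  | _ n ih =>
    intro B C h hcard
    have grow : EGrows H G C → T ∨ Good H G := by
      rintro ⟨B', C', h1, h2⟩
      exact ih _ (by rw [← hcard]; exact compl_lt h2) B' C' h1 rfl
    obtain h1 | h1 | h1 | ⟨a, -, B', c, hca, hE, ha, hc⟩ := h.step hK hd hn hT
    · exact Or.inl h1
    · exact Or.inr h1
    · exact grow h1
    obtain h1 | h1 | h1 | ⟨a', h1, -⟩ := hE.step hK hd hn hT
    · exact Or.inl h1
    · exact Or.inr h1
    · exact grow h1
    by_cases haa : a = a'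
    · subst haa
      exact (h1 c hca hc).elim
    · exact (h1 a haa ha).elim

end

section
variable {V : Type*} {G : SimpleGraph V}

theorem k33_l (i j : Fin 3) : K33.Adj (Sum.inl i) (Sum.inr j) := by simp [K33]

theorem k33_r (i j : Fin 3) : K33.Adj (Sum.inr i) (Sum.inl j) := by simp [K33]

theorem k33_adj {x y : Fin 3 ⊕ Fin 3} (h : K33.Adj x y) :
    (∃ i j, x = Sum.inl i ∧ y = Sum.inr j) ∨ (∃ i j, x = Sum.inr i ∧ y = Sum.inl j) := by
  rcases x with x | x <;> rcases y with y | y <;> simp [K33] at h ⊢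

theorem four_fin3 (a b c d : Fin 3) (h1 : a ≠ b) (h2 : a ≠ c) (h3 : a ≠ d) (h4 : b ≠ c)
    (h5 : b ≠ d) (h6 : c ≠ d) : False := by
  simp only [ne_eq, Fin.ext_iff] at *; omega

theorem k33_four (a c1 c2 c3 c4 : Fin 3 ⊕ Fin 3) (h1 : K33.Adj a c1) (h2 : K33.Adj a c2)
    (h3 : K33.Adj a c3) (h4 : K33.Adj a c4) (h12 : c1 ≠ c2) (h13 : c1 ≠ c3) (h14 : c1 ≠ c4)
    (h23 : c2 ≠ c3) (h24 : c2 ≠ c4) (h34 : c3 ≠ c4) : False := by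
  rcases a with a | a <;> rcases c1 with c1 | c1 <;> rcases c2 with c2 | c2 <;>
    rcases c3 with c3 | c3 <;> rcases c4 with c4 | c4 <;> simp [K33] at h1 h2 h3 h4
  all_goals
    exact four_fin3 c1 c2 c3 c4 (by simpa using h12) (by simpa using h13) (by simpa using h14)
      (by simpa using h23) (by simpa using h24) (by simpa using h34)

theorem hd33 : Hd K33 := by
  intro a b c1 c2 c3 c4 hb h1 h2 h3 h4 _ _ _ _ h12 h13 h14 h23 h24 h34
  exact k33_four a c1 c2 c3 c4 h1 h2 h3 h4 h12 h13 h14 h23 h24 h34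

theorem hn33 : Hn K33 := by
  rintro (a | a) (b | b)
  · exact ⟨Sum.inr 0, k33_l _ _, by simp⟩
  · exact ⟨Sum.inr (b + 1), k33_l _ _, by simp⟩
  · exact ⟨Sum.inl (b + 1), k33_r _ _, by simp⟩
  · exact ⟨Sum.inl 0, k33_r _ _, by simp⟩

theorem alt33 : Alt K33 G False := by
  intro B C _ a P Q _ c1 c2 c3 c4 h1 h2 h3 h4 _ _ _ _ h12 h13 h14 h23 h24 h34
  exact k33_four a c1 c2 c3 c4 h1 h2 h3 h4 h12 h13 h14 h23 h24 h34

theorem good33 [Finite V] (hK : KConnected G 3) {B : Fin 3 ⊕ Fin 3 → Set V} {C : Set V}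
    (h : Ext K33 G B C) : Good K33 G :=
  (Ext.good hK hd33 hn33 alt33 _ B C h rfl).resolve_left id

theorem hd5 : Hd K5 := by
  intro a b c1 c2 c3 c4 hb h1 h2 h3 h4 g1 g2 g3 g4 h12 h13 h14 h23 h24 h34
  simp only [K5, SimpleGraph.top_adj] at hb h1 h2 h3 h4
  have h := Finset.card_le_univ ({a, b, c1, c2, c3, c4} : Finset (Fin 5))
  rw [Finset.card_insert_of_notMem, Finset.card_insert_of_notMem, Finset.card_insert_of_notMem,
    Finset.card_insert_of_notMem, Finset.card_insert_of_notMem] at h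
  · simp at h
  all_goals simp only [Finset.mem_insert, Finset.mem_singleton]; tauto

theorem hn5 : Hn K5 := by
  intro a b
  simp only [K5, SimpleGraph.top_adj]
  revert a b; decide

/-- Three branch sets on each side. -/
def six (l r : Fin 3 → Set V) : Fin 3 ⊕ Fin 3 → Set V := Sum.elim l r

theorem ext33_of {l r : Fin 3 → Set V} {C : Set V} (cl : ∀ i, Cn G (l i)) (cr : ∀ i, Cn G (r i))
    (dl : ∀ i j, i ≠ j → Disjoint (l i) (l j)) (dr : ∀ i j, i ≠ j → Disjoint (r i) (r j))
    (dlr : ∀ i j, Disjoint (l i) (r j)) (t : ∀ i j, Touch G (l i) (r j)) (cC : Cn G C)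
    (dCl : ∀ i, Disjoint C (l i)) (dCr : ∀ i, Disjoint C (r i)) : Ext K33 G (six l r) C := by
  refine ⟨⟨?_, ?_, ?_⟩, cC, ?_⟩
  · rintro (i | i)
    · exact cl i
    · exact cr i
  · rintro (i | i) (j | j) hij
    · exact dl i j (by simpa using hij)
    · exact dlr i j
    · exact (dlr j i).symm
    · exact dr i j (by simpa using hij)
  · intro x y hxy
    rcases k33_adj hxy with ⟨i, j, rfl, rfl⟩ | ⟨i, j, rfl, rfl⟩
    · exact t i j
    · exact (t j i).symm
  · rintro (i | i)
    · exact dCl i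
    · exact dCr i

theorem alt5 [Finite V] (hK : KConnected G 3) : Alt K5 G (Good K33 G) := by
  intro B C h a P Q hs c1 c2 c3 c4 h1 h2 h3 h4 t1 t2 t3 t4 h12 h13 h14 h23 h24 h34
  have hPd : ∀ w, K5.Adj a w → Disjoint P (B w) := fun w hw =>
    (h.mod.disj a w hw.ne).mono_left hs.left
  have hQd : ∀ w, K5.Adj a w → Disjoint Q (B w) := fun w hw =>
    (h.mod.disj a w hw.ne).mono_left hs.right
  have tt : ∀ i j, i ≠ j → Touch G (B i) (B j) := fun i j hij => h.mod.adj i j hij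
  have dd := h.mod.disj
  have cc := h.mod.conn
  refine good33 hK (B := six ![P, B c3, B c4] ![Q, B c1, B c2]) (C := C)
    (ext33_of ?_ ?_ ?_ ?_ ?_ ?_ h.cC ?_ ?_)
  · simp [Fin.forall_fin_succ, hs.cP, cc]
  · simp [Fin.forall_fin_succ, hs.cQ, cc]
  · simp [Fin.forall_fin_succ, hPd _ h3, hPd _ h4, (hPd _ h3).symm, (hPd _ h4).symm, dd _ _ h34,
      (dd _ _ h34).symm]
  · simp [Fin.forall_fin_succ, hQd _ h1, hQd _ h2, (hQd _ h1).symm, (hQd _ h2).symm, dd _ _ h12,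
      (dd _ _ h12).symm]
  · simp [Fin.forall_fin_succ, hs.dj, hPd _ h1, hPd _ h2, (hQd _ h3).symm, (hQd _ h4).symm,
      dd _ _ h13.symm, dd _ _ h14.symm, dd _ _ h23.symm, dd _ _ h24.symm]
  · simp [Fin.forall_fin_succ, hs.tc, t1, t2, t3.symm, t4.symm,
      tt _ _ h13.symm, tt _ _ h14.symm, tt _ _ h23.symm, tt _ _ h24.symm]
  · simp [Fin.forall_fin_succ, h.dC, (h.dC a).mono_right hs.left]
  · simp [Fin.forall_fin_succ, h.dC, (h.dC a).mono_right hs.right]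

theorem good5 [Finite V] (hK : KConnected G 3) {B : Fin 5 → Set V} {C : Set V}
    (h : Ext K5 G B C) : Good K33 G ∨ Good K5 G :=
  Ext.good hK hd5 hn5 (alt5 hK) _ B C h rfl

/-- Branch sets with the extra set at `none`. -/
def optB {U : Type*} (B : U → Set V) (C : Set V) : Option U → Set V
  | none => C
  | some u => B u

theorem minor_of {U : Type*} {K : SimpleGraph U} {E : SimpleGraph (Option U)} {B : U → Set V}
    {C : Set V} (h : Ext K G B C) (h1 : ∀ x y, E.Adj (some x) (some y) → K.Adj x y)
    (h2 : ∀ x, E.Adj none (some x) → Touch G C (B x)) : IsMinor E G := by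
  have hc : ∀ w, Cn G (optB B C w) := by
    rintro (_ | w)
    · exact h.cC
    · exact h.mod.conn w
  refine ⟨optB B C, fun w => (hc w).nonempty, hc, ?_, ?_⟩
  · rintro (_ | x) (_ | y) hxy
    · exact (hxy rfl).elim
    · exact h.dC y
    · exact (h.dC x).symm
    · exact h.mod.disj x y (by simpa using hxy)
  · rintro (_ | x) (_ | y) hxy
    · exact (hxy.ne rfl).elim
    · exact h2 y hxy
    · exact (h2 x hxy.symm).symm
    · exact h.mod.adj x y (h1 x y hxy)

theorem ext_of_minor {U : Type*} {K : SimpleGraph U} {E : SimpleGraph (Option U)}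
    (h : IsMinor E G) (h1 : ∀ x y, K.Adj x y → E.Adj (some x) (some y)) :
    ∃ B C, Ext K G B C := by
  obtain ⟨B, -, hc, hd, ha⟩ := h
  exact ⟨fun x => B (some x), B none, ⟨fun w => hc _, fun i j hij => hd (by simpa using hij),
    fun i j hij => ha (h1 i j hij)⟩, hc _, fun i => hd (by simp)⟩

theorem Ext.comp {U U' : Type*} {K : SimpleGraph U} {K' : SimpleGraph U'} {B : U → Set V}
    {C : Set V} (h : Ext K G B C) (f : U' → U) (hf : Function.Injective f)
    (ha : ∀ x y, K'.Adj x y → K.Adj (f x) (f y)) : Ext K' G (B ∘ f) C :=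
  ⟨⟨fun w => h.mod.conn _, fun i j hij => h.mod.disj _ _ (hf.ne hij),
    fun i j hij => h.mod.adj _ _ (ha i j hij)⟩, h.cC, fun i => h.dC _⟩

theorem ex2_of (h : Good K5 G) : IsMinor EX2 G := by
  obtain ⟨B, C, h, i, j, k, hij, hik, hjk, ti, tj, tk⟩ := h
  obtain ⟨l, m, hl⟩ : ∃ l m, Function.Injective ![i, j, k, l, m] := by
    clear ti tj tk h
    revert i j k; decide
  refine minor_of (h.comp (K' := K5) ![i, j, k, l, m] hl (fun x y hxy => hl.ne hxy)) ?_ ?_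
  · intro x y hxy
    simp only [EX2, SimpleGraph.fromRel_adj] at hxy
    simp only [K5, SimpleGraph.top_adj]
    simpa using hxy.1
  · intro x hx
    simp only [EX2, SimpleGraph.fromRel_adj] at hx
    fin_cases x
    · exact ti
    · exact tj
    · exact tk
    · simp at hx
    · simp at hx

/-- Swap the two sides of `K33`. -/
theorem Ext.swap {B : Fin 3 ⊕ Fin 3 → Set V} {C : Set V} (h : Ext K33 G B C) :
    Ext K33 G (B ∘ Sum.swap) C := by
  refine h.comp _ (Equiv.sumComm _ _).injective ?_
  intro x y hxy
  rcases k33_adj hxy with ⟨i, j, rfl, rfl⟩ | ⟨i, j, rfl, rfl⟩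
  · exact k33_r _ _
  · exact k33_l _ _

theorem perm3 (i j : Fin 3) (h : i ≠ j) : ∃ k, Function.Injective ![i, j, k] := by
  revert i j; decide

theorem Ext.perm {B : Fin 3 ⊕ Fin 3 → Set V} {C : Set V} (h : Ext K33 G B C) {f g : Fin 3 → Fin 3}
    (hf : Function.Injective f) (hg : Function.Injective g) :
    Ext K33 G (B ∘ Sum.map f g) C := by
  refine h.comp _ (hf.sumMap hg) ?_
  intro x y hxy
  rcases k33_adj hxy with ⟨i, j, rfl, rfl⟩ | ⟨i, j, rfl, rfl⟩
  · exact k33_l _ _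
  · exact k33_r _ _

theorem ex1_of {B : Fin 3 ⊕ Fin 3 → Set V} {C : Set V} (h : Ext K33 G B C) {i j k : Fin 3}
    (hij : i ≠ j) (hik : i ≠ k) (hjk : j ≠ k) (ti : Touch G C (B (Sum.inl i)))
    (tj : Touch G C (B (Sum.inl j))) (tk : Touch G C (B (Sum.inl k))) : IsMinor EX1 G := by
  refine minor_of h ?_ ?_
  · rintro (x | x) (y | y) hxy <;> simp [EX1, K33] at hxy ⊢
  · rintro (x | x) hx
    · by_cases h1 : x = i
      · subst h1; exact ti
      by_cases h2 : x = j
      · subst h2; exact tj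
      by_cases h3 : x = k
      · subst h3; exact tk
      exact (four_fin3 x i j k h1 h2 h3 hij hik hjk).elim
    · simp [EX1] at hx

theorem ex8_of {B : Fin 3 ⊕ Fin 3 → Set V} {C : Set V} (h : Ext K33 G B C) {i j k : Fin 3}
    (hij : i ≠ j) (ti : Touch G C (B (Sum.inl i)))
    (tj : Touch G C (B (Sum.inl j))) (tk : Touch G C (B (Sum.inr k))) : IsMinor EX8 G := by
  obtain ⟨l, hl⟩ := perm3 i j hij
  have hk : Function.Injective (fun x : Fin 3 => x + k) := add_left_injective k
  refine minor_of (h.perm hl hk) ?_ ?_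
  · rintro (x | x) (y | y) hxy <;> simp [EX8, K33] at hxy ⊢
  · rintro (x | x) hx
    · simp [EX8] at hx
      rcases hx with rfl | rfl
      · exact ti
      · exact tj
    · simp [EX8] at hx
      subst hx
      simpa using tk

theorem ex18_of (h : Good K33 G) : IsMinor EX1 G ∨ IsMinor EX8 G := by
  obtain ⟨B, C, h, i, j, k, hij, hik, hjk, ti, tj, tk⟩ := h
  have hs := h.swap
  rcases i with i | i <;> rcases j with j | j <;> rcases k with k | k
  · exact Or.inl (ex1_of h (by simpa using hij) (by simpa using hik) (by simpa using hjk) ti tj tk)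
  · exact Or.inr (ex8_of h (by simpa using hij) ti tj tk)
  · exact Or.inr (ex8_of h (by simpa using hik) ti tk tj)
  · exact Or.inr (ex8_of hs (by simpa using hjk) tj tk ti)
  · exact Or.inr (ex8_of h (by simpa using hjk) tj tk ti)
  · exact Or.inr (ex8_of hs (by simpa using hik) ti tk tj)
  · exact Or.inr (ex8_of hs (by simpa using hij) ti tj tk)
  · exact Or.inl (ex1_of hs (by simpa using hij) (by simpa using hik) (by simpa using hjk) ti tj tk)

theorem main [Finite V] (hK : KConnected G 3) (h : IsMinor K5plus G ∨ IsMinor K33plus G) :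
    IsMinor EX1 G ∨ IsMinor EX2 G ∨ IsMinor EX8 G := by
  have key : Good K33 G ∨ Good K5 G := by
    rcases h with h | h
    · obtain ⟨B, C, h⟩ := ext_of_minor (K := K5) h (by
        intro x y hxy
        simpa [K5plus, K5, eq_comm] using hxy)
      exact good5 hK h
    · obtain ⟨B, C, h⟩ := ext_of_minor (K := K33) h (by
        rintro (x | x) (y | y) hxy <;> simp [K33plus, K33] at hxy ⊢)
      exact Or.inl (good33 hK h)
  rcases key with h | h
  · rcases ex18_of h with h | h
    · exact Or.inl h
    · exact Or.inr (Or.inr h)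
  · exact Or.inr (Or.inl (ex2_of h))

end

end Stmt3

/-- A 3-connected graph with a K5+ or K33+ minor has an EX1, EX2, or EX8 minor;
consequently every 3-connected {EX1,EX2,EX8}-free graph is {K5+,K33+}-free. -/
theorem stmt3 :
    (∀ (V : Type) [Fintype V] (G : SimpleGraph V), KConnected G 3 →
      (IsMinor K5plus G ∨ IsMinor K33plus G) →
      (IsMinor EX1 G ∨ IsMinor EX2 G ∨ IsMinor EX8 G)) ∧
    (∀ (V : Type) [Fintype V] (G : SimpleGraph V), KConnected G 3 →
      (¬ IsMinor EX1 G ∧ ¬ IsMinor EX2 G ∧ ¬ IsMinor EX8 G) →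
      (¬ IsMinor K5plus G ∧ ¬ IsMinor K33plus G)) := by
  refine ⟨fun V _ G hK h => Stmt3.main hK h, fun V _ G hK h => ?_⟩
  constructor
  · intro h5
    have := Stmt3.main hK (Or.inl h5)
    tauto
  · intro h33
    have := Stmt3.main hK (Or.inr h33)
    tauto
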